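/- Let (w̃, m̃, H̃) solve the cell problem: for each x ∈ 𝕋^d and Λ ∈ ℝ^d, (1/2)|Λ+∇_y w̃(x,Λ,y)|² + V(x,y) = ln m̃(x,Λ,y) + H̃(x,Λ) and −div_y(m̃(Λ+∇_y w̃)) = 0 in 𝒴^d with ∫_{𝒴^d} m̃ dy = 1, m̃ > 0. Then there exists a constant C, independent of x and Λ, such that for all x ∈ 𝕋^d and Λ ∈ ℝ^d: sup_{y∈𝒴^d} m̃(x,Λ,y) ≤ C, and sup_{y∈𝒴^d} |Λ + ∇_y w̃(x,Λ,y)| ≤ C + |Λ|. -/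

import Mathlib

open MeasureTheory Filter Topology Function

noncomputable section

/-- The unit cell `𝒴^d = [0,1)^d`. -/
def cube (d : ℕ) : Set (Fin d → ℝ) := Set.univ.pi fun _ => Set.Ico (0 : ℝ) 1

/-- `ℤ^d`-periodicity of a function on `ℝ^d`; functions on the torus `𝕋^d`
(and `𝒴^d`-periodic functions) are identified with such functions. -/
def ZPer {d : ℕ} (f : (Fin d → ℝ) → ℝ) : Prop :=
  ∀ (x : Fin d → ℝ) (k : Fin d → ℤ), f (fun i => x i + (k i : ℝ)) = f x

/-- The `i`-th partial derivative. -/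
def pder {d : ℕ} (i : Fin d) (f : (Fin d → ℝ) → ℝ) (x : Fin d → ℝ) : ℝ :=
  fderiv ℝ f x (Pi.single i 1)

/-- `V : 𝕋^d × ℝ^d → ℝ` smooth, `𝒴^d`-periodic in the second variable
(and periodic in the first, i.e. defined on the torus). -/
def SmoothV {d : ℕ} (V : (Fin d → ℝ) → (Fin d → ℝ) → ℝ) : Prop :=
  ContDiff ℝ (⊤ : ℕ∞) (uncurry V) ∧ (∀ y, ZPer fun x => V x y) ∧ (∀ x, ZPer (V x))

/-- `sup_{(x,y) ∈ 𝕋^d × 𝒴^d} V (x,y)` (by periodicity, the sup over all of `ℝ^d × ℝ^d`). -/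
def supV {d : ℕ} (V : (Fin d → ℝ) → (Fin d → ℝ) → ℝ) : ℝ :=
  ⨆ q : (Fin d → ℝ) × (Fin d → ℝ), V q.1 q.2

/-- `inf_{(x,y) ∈ 𝕋^d × 𝒴^d} V (x,y)`. -/
def infV {d : ℕ} (V : (Fin d → ℝ) → (Fin d → ℝ) → ℝ) : ℝ :=
  ⨅ q : (Fin d → ℝ) × (Fin d → ℝ), V q.1 q.2

/-- `(w, m, H)` is a classical solution of the cell problem at `(x, Λ)`:
`|Λ+∇_y w|²/2 + V(x,y) = ln m + H`, `-div_y(m (Λ+∇_y w)) = 0` in `𝒴^d`, `∫_{𝒴^d} m = 1`. -/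
def CellSolAt {d : ℕ} (V : (Fin d → ℝ) → (Fin d → ℝ) → ℝ)
    (x Λ : Fin d → ℝ) (w m : (Fin d → ℝ) → ℝ) (H : ℝ) : Prop :=
  ContDiff ℝ 2 w ∧ ZPer w ∧ ContDiff ℝ 1 m ∧ ZPer m ∧ (∀ y, 0 < m y) ∧
  (∀ y, (∑ i, (Λ i + pder i w y) ^ 2) / 2 + V x y = Real.log (m y) + H) ∧
  (∀ y, (∑ i, pder i (fun z => m z * (Λ i + pder i w z)) y) = 0) ∧
  (∫ y in cube d, m y) = 1

/-!
Write `P = Λ + ∇w` for the velocity. Differentiating the Hamilton–Jacobi equation gives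
`∇m = m (D²w P + ∇V)`. Since the flux `m P` is divergence free, integrating by parts twice shows
`∫ ∑ᵢₖ ∂ₖ(m Pᵢ) ∂ᵢ(m^(p+1) Pₖ) = 0`; expanding the integrand, the terms in `|D²w|²` and `(P · ∇m)²`
are nonnegative, and what remains is the energy estimate `∫ m^p |∇m|² ≤ ∫ m^(p+2) |∇V|²` for
every `p`, in which `Λ` no longer appears. Applied to the powers `m^(2^k)`, Nash's inequality
turns it into Moser's iteration, and `∫ m = 1` then bounds `sup m` in terms of `sup |∇V|` alone.

For the velocity, `|P|² = 2 (ln m + H - V)`, so it remains to bound `H` from above. The flux is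
orthogonal to `∇w`, that is `∫ m P · (P - Λ) = 0`, hence `∫ m |P|² ≤ |Λ|²`; as `∫ m ln m ≥ 0`, the
equation integrated against `m` yields `H ≤ |Λ|²/2 + sup V`.
-/

section Cell

variable {d : ℕ} {f g : (Fin d → ℝ) → ℝ}

theorem measurableSet_cube (d : ℕ) : MeasurableSet (cube d) :=
  MeasurableSet.univ_pi fun _ => measurableSet_Ico

theorem cube_subset_Icc (d : ℕ) : cube d ⊆ Set.Icc 0 1 := fun _ hy =>
  ⟨fun i => (hy i trivial).1, fun i => (hy i trivial).2.le⟩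

theorem volume_cube (d : ℕ) : volume (cube d) = 1 := by
  simp [cube, volume_pi_pi]

instance isProbabilityMeasure_restrict_cube (d : ℕ) :
    IsProbabilityMeasure (volume.restrict (cube d)) :=
  ⟨by rw [Measure.restrict_apply_univ, volume_cube]⟩

theorem integrable_cube_of_continuous (hf : Continuous f) :
    Integrable f (volume.restrict (cube d)) :=
  (hf.continuousOn.integrableOn_compact isCompact_Icc).mono_set (cube_subset_Icc d)

theorem integrable_prod_cube_of_continuous {X : Type*} [TopologicalSpace X] [T2Space X]
    [MeasureSpace X] [OpensMeasurableSpace X] [SFinite (volume : Measure X)]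
    [IsFiniteMeasureOnCompacts (volume : Measure X)] {s K : Set X} (hK : IsCompact K)
    (hsK : s ⊆ K) {F : X × (Fin d → ℝ) → ℝ} (hF : Continuous F) :
    Integrable F ((volume.restrict s).prod (volume.restrict (cube d))) := by
  rw [Measure.prod_restrict]
  exact (hF.continuousOn.integrableOn_compact (hK.prod isCompact_Icc)).mono_set
    (Set.prod_mono hsK (cube_subset_Icc d))

/-- The lattice `ℤ^d` of periods. It is presented as a `ℤ`-span of the standard basis so that the
results on fundamental domains of spans apply to `cube d`. -/
abbrev integerLattice (d : ℕ) : AddSubgroup (Fin d → ℝ) :=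
  (Submodule.span ℤ (Set.range (Pi.basisFun ℝ (Fin d)))).toAddSubgroup

instance countable_integerLattice (d : ℕ) : Countable (integerLattice d) :=
  inferInstanceAs (Countable (Submodule.span ℤ (Set.range (Pi.basisFun ℝ (Fin d)))))

theorem isAddFundamentalDomain_cube (d : ℕ) :
    IsAddFundamentalDomain (integerLattice d) (cube d) volume := by
  have h := ZSpan.isAddFundamentalDomain' (Pi.basisFun ℝ (Fin d)) volume
  rwa [ZSpan.fundamentalDomain_pi_basisFun] at h

namespace ZPer

theorem vadd (hf : ZPer f) (v : integerLattice d) (x : Fin d → ℝ) : f (v +ᵥ x) = f x := by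
  have hv : ∀ i, ∃ k : ℤ, (k : ℝ) = (v : Fin d → ℝ) i := by
    simpa using ((Pi.basisFun ℝ (Fin d)).mem_span_iff_repr_mem ℤ (v : Fin d → ℝ)).1 v.2
  choose k hk using hv
  rw [← hf x k]
  congr 1
  ext i
  simp [hk, AddSubgroup.vadd_def, add_comm]

theorem comp (hf : ZPer f) (φ : ℝ → ℝ) : ZPer fun y => φ (f y) := fun x k => by
  simp only [hf x k]

theorem mul (hf : ZPer f) (hg : ZPer g) : ZPer fun y => f y * g y := fun x k => by
  simp only [hf x k, hg x k]

theorem comp_add_right (hf : ZPer f) (z : Fin d → ℝ) : ZPer fun y => f (y + z) := fun x k => by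
  refine Eq.trans (congrArg f ?_) (hf (x + z) k)
  ext i
  simp only [Pi.add_apply]
  ring

open scoped Pointwise in
theorem integral_comp_add_right (hf : ZPer f) (z : Fin d → ℝ) :
    ∫ y in cube d, f (y + z) = ∫ y in cube d, f y := by
  have hcube := isAddFundamentalDomain_cube d
  have hpre : (fun y => y + z) ⁻¹' (z +ᵥ cube d) = cube d := by
    ext y
    simp [Set.mem_vadd_set_iff_neg_vadd_mem, add_comm y z]
  calc
    ∫ y in cube d, f (y + z) = ∫ y in z +ᵥ cube d, f y := by
      rw [← (measurePreserving_add_right volume z).setIntegral_preimage_emb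
        (measurableEmbedding_addRight z) f, hpre]
    _ = ∫ y in cube d, f y := ((hcube.vadd_of_comm z).setIntegral_eq hcube) hf.vadd

theorem measure_lt_pos (hf : ZPer f) (hc : Continuous f) {c : ℝ} {y : Fin d → ℝ} (hy : c < f y) :
    0 < volume.restrict (cube d) {u | c < f u} := by
  have hopen : IsOpen {u | c < f u} := isOpen_lt continuous_const hc
  rw [Measure.restrict_apply hopen.measurableSet, pos_iff_ne_zero]
  refine fun h0 => (hopen.measure_pos volume ⟨y, hy⟩).ne'
    ((isAddFundamentalDomain_cube d).measure_zero_of_invariant _ (fun v => ?_) h0)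
  ext u
  rw [Set.mem_vadd_set_iff_neg_vadd_mem, Set.mem_ofPred_eq, Set.mem_ofPred_eq, hf.vadd]

theorem le_of_frequently_integral_pow_le (hf : ZPer f) (hc : Continuous f) (h0 : ∀ y, 0 ≤ f y)
    {E : ℝ} (hE : 0 ≤ E) (h : ∃ᶠ n : ℕ in atTop, ∫ y in cube d, f y ^ n ≤ E ^ n)
    (y : Fin d → ℝ) : f y ≤ E := by
  by_contra! hlt
  obtain ⟨c, hEc, hcy⟩ := exists_between hlt
  have hc0 : 0 < c := hE.trans_lt hEc
  set μ : Measure (Fin d → ℝ) := volume.restrict (cube d)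
  have hpos : 0 < μ.real {u | c < f u} :=
    ENNReal.toReal_pos (hf.measure_lt_pos hc hcy).ne' (measure_ne_top _ _)
  have hmarkov (n : ℕ) : c ^ n * μ.real {u | c < f u} ≤ ∫ u, f u ^ n ∂μ :=
    calc
      c ^ n * μ.real {u | c < f u} ≤ c ^ n * μ.real {u | c ^ n ≤ f u ^ n} :=
        mul_le_mul_of_nonneg_left
          (measureReal_mono fun u hu => pow_le_pow_left₀ hc0.le (le_of_lt hu) n) (by positivity)
      _ ≤ ∫ u, f u ^ n ∂μ :=
        mul_meas_ge_le_integral_of_nonneg (Eventually.of_forall fun u => pow_nonneg (h0 u) n)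
          (integrable_cube_of_continuous (hc.pow n)) _
  have hratio : Tendsto (fun n : ℕ => (E / c) ^ n) atTop (𝓝 0) :=
    tendsto_pow_atTop_nhds_zero_of_lt_one (by positivity) ((div_lt_one hc0).2 hEc)
  obtain ⟨n, hn, hlt⟩ := (h.and_eventually (hratio.eventually_lt_const hpos)).exists
  rw [div_pow, div_lt_iff₀' (by positivity)] at hlt
  exact (((hmarkov n).trans hn).trans_lt hlt).false

end ZPer

theorem exists_mem_Icc_forall_zPer_eq (x : Fin d → ℝ) :
    ∃ x' ∈ Set.Icc (0 : Fin d → ℝ) 1, ∀ f : (Fin d → ℝ) → ℝ, ZPer f → f x' = f x := by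
  refine ⟨fun i => x i + ((-⌊x i⌋ : ℤ) : ℝ), ⟨fun i => ?_, fun i => ?_⟩, fun f hf => hf x _⟩
  · simpa using Int.floor_le (x i)
  · simpa [add_comm] using (Int.lt_floor_add_one (x i)).le

theorem exists_abs_le_of_continuous_of_zPer {n : ℕ} {G : (Fin n → ℝ) → (Fin d → ℝ) → ℝ}
    (hG : Continuous (uncurry G)) (hleft : ∀ y, ZPer fun x => G x y) (hright : ∀ x, ZPer (G x)) :
    ∃ B, ∀ x y, |G x y| ≤ B := by
  obtain ⟨B, hB⟩ := ((isCompact_Icc (a := (0 : Fin n → ℝ)) (b := 1)).prod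
    (isCompact_Icc (a := (0 : Fin d → ℝ)) (b := 1))).exists_bound_of_continuousOn hG.continuousOn
  refine ⟨B, fun x y => ?_⟩
  obtain ⟨x', hx', hxx'⟩ := exists_mem_Icc_forall_zPer_eq x
  obtain ⟨y', hy', hyy'⟩ := exists_mem_Icc_forall_zPer_eq y
  rw [← hyy' _ (hright x), ← hxx' _ (hleft y')]
  exact hB (x', y') ⟨hx', hy'⟩

end Cell

section PartialDerivatives

variable {d : ℕ} {f g : (Fin d → ℝ) → ℝ}

/-- The squared Euclidean norm `|∇f|²` of the gradient. -/
def gradSq (f : (Fin d → ℝ) → ℝ) (y : Fin d → ℝ) : ℝ :=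
  ∑ i, pder i f y ^ 2

theorem gradSq_nonneg (f : (Fin d → ℝ) → ℝ) (y : Fin d → ℝ) : 0 ≤ gradSq f y :=
  Finset.sum_nonneg fun _ _ => sq_nonneg _

theorem contDiff_pder {n : WithTop ℕ∞} (hf : ContDiff ℝ (n + 1) f) (i : Fin d) :
    ContDiff ℝ n (pder i f) :=
  (hf.fderiv_right le_rfl).clm_apply contDiff_const

@[fun_prop]
theorem continuous_pder (hf : ContDiff ℝ 1 f) (i : Fin d) : Continuous (pder i f) :=
  (hf.continuous_fderiv one_ne_zero).clm_apply continuous_const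

@[fun_prop]
theorem continuous_gradSq (hf : ContDiff ℝ 1 f) : Continuous (gradSq f) := by
  unfold gradSq
  fun_prop

theorem ZPer.pder (hf : ZPer f) (i : Fin d) : ZPer (pder i f) := fun x k => by
  have hperiod : (fun y => f (y + fun j => (k j : ℝ))) = f := funext fun y => hf y k
  have hshift := fderiv_comp_add_right (𝕜 := ℝ) (f := f) (x := x) fun j => (k j : ℝ)
  rw [hperiod] at hshift
  exact congrArg (fun L => L (Pi.single i 1)) hshift.symm

theorem ZPer.gradSq (hf : ZPer f) : ZPer (gradSq f) := fun x k => by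
  simp only [_root_.gradSq, (hf.pder _) x k]

theorem fderiv_apply_eq_sum_pder (f : (Fin d → ℝ) → ℝ) (y z : Fin d → ℝ) :
    fderiv ℝ f y z = ∑ i, z i * pder i f y := by
  conv_lhs => rw [pi_eq_sum_univ' z]
  simp [pder, map_sum]

theorem pder_const_add (c : ℝ) (f : (Fin d → ℝ) → ℝ) (i : Fin d) (y : Fin d → ℝ) :
    pder i (fun z => c + f z) y = pder i f y := by
  simp only [pder, fderiv_const_add]

theorem pder_comp_add_right (f : (Fin d → ℝ) → ℝ) (z : Fin d → ℝ) (i : Fin d) (y : Fin d → ℝ) :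
    pder i (fun u => f (u + z)) y = pder i f (y + z) := by
  simp only [pder, fderiv_comp_add_right]

theorem pder_mul {y : Fin d → ℝ} (hf : DifferentiableAt ℝ f y) (hg : DifferentiableAt ℝ g y)
    (i : Fin d) : pder i (fun z => f z * g z) y = f y * pder i g y + g y * pder i f y := by
  simp [pder, fderiv_fun_mul hf hg]

theorem pder_pow {y : Fin d → ℝ} (hf : DifferentiableAt ℝ f y) (n : ℕ) (i : Fin d) :
    pder i (fun z => f z ^ n) y = n * f y ^ (n - 1) * pder i f y := by
  simp [pder, fderiv_fun_pow n hf]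

theorem gradSq_pow {y : Fin d → ℝ} (hf : DifferentiableAt ℝ f y) (n : ℕ) :
    gradSq (fun z => f z ^ n) y = n ^ 2 * (f y ^ (2 * (n - 1)) * gradSq f y) := by
  simp only [gradSq, pder_pow hf, Finset.mul_sum]
  refine Finset.sum_congr rfl fun i _ => ?_
  ring

theorem pder_comm {y : Fin d → ℝ} (hf : ContDiffAt ℝ 2 f y) (i k : Fin d) :
    pder i (pder k f) y = pder k (pder i f) y := by
  have hd : DifferentiableAt ℝ (fderiv ℝ f) y :=
    (hf.fderiv_right (m := 1) (by norm_num)).differentiableAt one_ne_zero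
  have hsecond (i k : Fin d) :
      pder i (pder k f) y = fderiv ℝ (fderiv ℝ f) y (Pi.single i 1) (Pi.single k 1) := by
    change fderiv ℝ (fun u => fderiv ℝ f u (Pi.single k 1)) y (Pi.single i 1) = _
    simp [fderiv_clm_apply hd (differentiableAt_const _)]
  rw [hsecond, hsecond]
  exact hf.isSymmSndFDerivAt (by simp) _ _

theorem continuous_gradSq_uncurry {X : Type*} [NormedAddCommGroup X] [NormedSpace ℝ X]
    {F : X → (Fin d → ℝ) → ℝ} (hF : ContDiff ℝ 1 (uncurry F)) :
    Continuous (uncurry fun x y => gradSq (F x) y) := by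
  have hfst : ContDiff ℝ 1 (uncurry fun (q : X × (Fin d → ℝ)) y => F q.1 y) :=
    hF.comp ((contDiff_fst.comp contDiff_fst).prodMk contDiff_snd)
  have : Continuous fun q : X × (Fin d → ℝ) => fderiv ℝ (F q.1) q.2 :=
    Continuous.fderiv_one hfst continuous_snd
  simp only [uncurry_def, gradSq, pder]
  fun_prop

end PartialDerivatives

section IntegrationByParts

variable {d : ℕ} {f g : (Fin d → ℝ) → ℝ}

theorem hasDerivAt_comp_add_smul (hf : Differentiable ℝ f) (y v : Fin d → ℝ) (t : ℝ) :
    HasDerivAt (fun s : ℝ => f (y + s • v)) (fderiv ℝ f (y + t • v) v) t := by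
  have hline : HasDerivAt (fun s : ℝ => y + s • v) v t := by
    simpa using ((hasDerivAt_id t).smul_const v).const_add y
  exact (hf _).hasFDerivAt.comp_hasDerivAt t hline

theorem hasDerivAt_integral_cube_mul_comp_add_smul (hf : Continuous f) (hg : ContDiff ℝ 1 g)
    (v : Fin d → ℝ) :
    HasDerivAt (fun t : ℝ => ∫ y in cube d, f y * g (y + t • v))
      (∫ y in cube d, f y * fderiv ℝ g y v) 0 := by
  have hg0 := hg.continuous
  have := hg.continuous_fderiv one_ne_zero
  have hcont : Continuous fun p : ℝ × (Fin d → ℝ) => f p.2 * fderiv ℝ g (p.2 + p.1 • v) v := by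
    fun_prop
  obtain ⟨B, hB⟩ := ((isCompact_Icc (a := (-1 : ℝ)) (b := 1)).prod
    (isCompact_Icc (a := (0 : Fin d → ℝ)) (b := 1))).exists_bound_of_continuousOn hcont.continuousOn
  have hderiv := hasDerivAt_integral_of_dominated_loc_of_deriv_le
    (μ := volume.restrict (cube d)) (x₀ := (0 : ℝ)) (s := Set.Icc (-1) 1)
    (F := fun t y => f y * g (y + t • v)) (F' := fun t y => f y * fderiv ℝ g (y + t • v) v)
    (bound := fun _ => B) (Icc_mem_nhds (by norm_num) (by norm_num))
    (Eventually.of_forall fun t => Continuous.aestronglyMeasurable (by fun_prop))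
    (integrable_cube_of_continuous (by fun_prop)) (Continuous.aestronglyMeasurable (by fun_prop))
    ((ae_restrict_iff' (measurableSet_cube d)).2 <| Eventually.of_forall fun y hy t ht =>
      hB (t, y) ⟨ht, cube_subset_Icc d hy⟩)
    (integrable_const B)
    (Eventually.of_forall fun y t _ =>
      (hasDerivAt_comp_add_smul (hg.differentiable one_ne_zero) y v t).const_mul (f y))
  simpa using hderiv.2

theorem integral_cube_pder_eq_zero (hf : ContDiff ℝ 1 f) (pf : ZPer f) (i : Fin d) :
    ∫ y in cube d, pder i f y = 0 := by
  have h := hasDerivAt_integral_cube_mul_comp_add_smul (f := fun _ => 1) continuous_const hf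
    (Pi.single i 1)
  simp only [one_mul, pf.integral_comp_add_right] at h
  exact h.unique (hasDerivAt_const _ _)

theorem integral_cube_mul_pder (hf : ContDiff ℝ 1 f) (hg : ContDiff ℝ 1 g)
    (pf : ZPer f) (pg : ZPer g) (i : Fin d) :
    ∫ y in cube d, f y * pder i g y = -∫ y in cube d, g y * pder i f y := by
  have h := integral_cube_pder_eq_zero (hf.mul hg) (pf.mul pg) i
  have hf0 := hf.continuous
  have hg0 := hg.continuous
  simp only [pder_mul (hf.differentiable one_ne_zero _) (hg.differentiable one_ne_zero _)] at h
  rw [integral_add (integrable_cube_of_continuous (by fun_prop))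
    (integrable_cube_of_continuous (by fun_prop))] at h
  exact eq_neg_of_add_eq_zero_left h

/-- Two integrations by parts would need a second derivative; instead, one derivative is replaced by
the difference quotient along a translation and moved across by translation invariance. -/
theorem integral_cube_pder_mul_pder_comm (hf : ContDiff ℝ 1 f) (hg : ContDiff ℝ 1 g)
    (pf : ZPer f) (pg : ZPer g) (i k : Fin d) :
    ∫ y in cube d, pder k f y * pder i g y = ∫ y in cube d, pder i f y * pder k g y := by
  set v : Fin d → ℝ := Pi.single i 1
  have htranslate (t : ℝ) : ∫ y in cube d, pder k f y * g (y + t • v) =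
      -∫ y in cube d, pder k g y * f (y + t • -v) :=
    have hgt : ContDiff ℝ 1 fun y => g (y + t • v) := hg.comp (contDiff_id.add contDiff_const)
    calc
      ∫ y in cube d, pder k f y * g (y + t • v)
        = -∫ y in cube d, f y * pder k g (y + t • v) := by
          simp only [mul_comm (pder k f _), pder_comp_add_right,
            integral_cube_mul_pder hgt hf (pg.comp_add_right _) pf k]
      _ = -∫ y in cube d, pder k g y * f (y + t • -v) := by
          rw [← ((pg.pder k).mul (pf.comp_add_right (t • -v))).integral_comp_add_right (t • v)]
          simp [add_assoc, mul_comm]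
  have hleft : HasDerivAt (fun t : ℝ => ∫ y in cube d, pder k f y * g (y + t • v))
      (∫ y in cube d, pder k f y * pder i g y) 0 :=
    hasDerivAt_integral_cube_mul_comp_add_smul (continuous_pder hf k) hg v
  have hright : HasDerivAt (fun t : ℝ => ∫ y in cube d, pder k g y * f (y + t • -v))
      (-∫ y in cube d, pder k g y * pder i f y) 0 := by
    have h := hasDerivAt_integral_cube_mul_comp_add_smul (continuous_pder hg k) hf (-v)
    simp only [map_neg, mul_neg, integral_neg] at h
    exact h
  simp only [htranslate] at hleft
  rw [hleft.unique hright.neg, neg_neg]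
  simp only [mul_comm]

theorem integral_cube_sum_mul_pder {F : Fin d → (Fin d → ℝ) → ℝ} (hF : ∀ i, ContDiff ℝ 1 (F i))
    (pF : ∀ i, ZPer (F i)) (hg : ContDiff ℝ 1 g) (pg : ZPer g) :
    ∫ y in cube d, ∑ i, F i y * pder i g y = -∫ y in cube d, g y * ∑ i, pder i (F i) y := by
  have hF0 := fun i => (hF i).continuous
  have hg0 := hg.continuous
  simp only [Finset.mul_sum]
  rw [integral_finsetSum _ fun i _ => integrable_cube_of_continuous (by fun_prop),
    integral_finsetSum _ fun i _ => integrable_cube_of_continuous (by fun_prop),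
    ← Finset.sum_neg_distrib]
  exact Finset.sum_congr rfl fun i _ => integral_cube_mul_pder (hF i) hg (pF i) pg i

theorem integral_cube_sum_pder_mul_pder {F G : Fin d → (Fin d → ℝ) → ℝ}
    (hF : ∀ i, ContDiff ℝ 1 (F i)) (pF : ∀ i, ZPer (F i))
    (hG : ∀ i, ContDiff ℝ 1 (G i)) (pG : ∀ i, ZPer (G i)) :
    ∫ y in cube d, ∑ i, ∑ k, pder k (F i) y * pder i (G k) y =
      ∫ y in cube d, (∑ i, pder i (F i) y) * ∑ k, pder k (G k) y := by
  have hint (i k j l : Fin d) : Integrable (fun y => pder j (F i) y * pder l (G k) y)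
      (volume.restrict (cube d)) := integrable_cube_of_continuous (by fun_prop)
  simp only [Finset.sum_mul_sum]
  rw [integral_finsetSum _ fun i _ => integrable_finsetSum _ fun k _ => hint i k k i,
    integral_finsetSum _ fun i _ => integrable_finsetSum _ fun k _ => hint i k i k]
  refine Finset.sum_congr rfl fun i _ => ?_
  rw [integral_finsetSum _ fun k _ => hint i k k i, integral_finsetSum _ fun k _ => hint i k i k]
  exact Finset.sum_congr rfl fun k _ =>
    integral_cube_pder_mul_pder_comm (hF i) (hG k) (pF i) (pG k) i k

end IntegrationByParts

section Nash

variable {d : ℕ} {f g : (Fin d → ℝ) → ℝ}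

theorem sq_intervalIntegral_zero_one_le {h : ℝ → ℝ} (hh : Continuous h) :
    (∫ t in (0 : ℝ)..1, h t) ^ 2 ≤ ∫ t in (0 : ℝ)..1, h t ^ 2 := by
  have : IsProbabilityMeasure (volume.restrict (Set.Ioc (0 : ℝ) 1)) := ⟨by simp⟩
  simp only [intervalIntegral.integral_of_le zero_le_one]
  exact even_two.convexOn_pow.map_integral_le (continuousOn_pow 2) isClosed_univ (by simp)
    hh.integrableOn_Ioc (hh.pow 2).integrableOn_Ioc

theorem sq_sub_le_mul_intervalIntegral_gradSq (hf : ContDiff ℝ 1 f) (y z : Fin d → ℝ) :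
    (f (y + z) - f y) ^ 2 ≤ (∑ i, z i ^ 2) * ∫ t in (0 : ℝ)..1, gradSq f (y + t • z) := by
  have hcont : Continuous fun t : ℝ => ∑ i, z i * pder i f (y + t • z) := by fun_prop
  have hftc : ∫ t in (0 : ℝ)..1, ∑ i, z i * pder i f (y + t • z) = f (y + z) - f y := by
    simpa using intervalIntegral.integral_eq_sub_of_hasDerivAt (a := 0) (b := 1)
      (f := fun t : ℝ => f (y + t • z))
      (fun t _ => fderiv_apply_eq_sum_pder f (y + t • z) z ▸
        hasDerivAt_comp_add_smul (hf.differentiable one_ne_zero) y z t)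
      (hcont.intervalIntegrable _ _)
  calc
    (f (y + z) - f y) ^ 2 ≤ ∫ t in (0 : ℝ)..1, (∑ i, z i * pder i f (y + t • z)) ^ 2 :=
      hftc ▸ sq_intervalIntegral_zero_one_le hcont
    _ ≤ ∫ t in (0 : ℝ)..1, (∑ i, z i ^ 2) * gradSq f (y + t • z) :=
      intervalIntegral.integral_mono_on zero_le_one ((hcont.pow 2).intervalIntegrable _ _)
        (Continuous.intervalIntegrable (by fun_prop) _ _)
        fun t _ => Finset.sum_mul_sq_le_sq_mul_sq _ _ _
    _ = (∑ i, z i ^ 2) * ∫ t in (0 : ℝ)..1, gradSq f (y + t • z) :=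
      intervalIntegral.integral_const_mul _ _

theorem integral_cube_sq_sub_comp_add_le (hf : ContDiff ℝ 1 f) (pf : ZPer f) (z : Fin d → ℝ) :
    ∫ y in cube d, (f (y + z) - f y) ^ 2 ≤ (∑ i, z i ^ 2) * ∫ y in cube d, gradSq f y := by
  have hf0 := hf.continuous
  have hint : Integrable (uncurry fun (t : ℝ) (y : Fin d → ℝ) => gradSq f (y + t • z))
      ((volume.restrict (Set.uIoc 0 1)).prod (volume.restrict (cube d))) :=
    integrable_prod_cube_of_continuous isCompact_uIcc Set.uIoc_subset_uIcc (by fun_prop)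
  have hline : Integrable (fun y => ∫ t in (0 : ℝ)..1, gradSq f (y + t • z))
      (volume.restrict (cube d)) := by
    simpa [intervalIntegral.intervalIntegral_eq_integral_uIoc] using hint.integral_prod_right
  calc
    ∫ y in cube d, (f (y + z) - f y) ^ 2
      ≤ ∫ y in cube d, (∑ i, z i ^ 2) * ∫ t in (0 : ℝ)..1, gradSq f (y + t • z) :=
        integral_mono (integrable_cube_of_continuous (by fun_prop)) (hline.const_mul _)
          fun y => sq_sub_le_mul_intervalIntegral_gradSq hf y z
    _ = (∑ i, z i ^ 2) * ∫ t in (0 : ℝ)..1, ∫ y in cube d, gradSq f (y + t • z) := by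
        rw [integral_const_mul, intervalIntegral_integral_swap hint]
    _ = (∑ i, z i ^ 2) * ∫ y in cube d, gradSq f y := by
        simp [pf.gradSq.integral_comp_add_right]

theorem half_integral_sq_le_integral_mul_comp_add (hf : ContDiff ℝ 1 f) (pf : ZPer f)
    {z : Fin d → ℝ}
    (hz : (∑ i, z i ^ 2) * ∫ y in cube d, gradSq f y ≤ ∫ y in cube d, f y ^ 2) :
    (∫ y in cube d, f y ^ 2) / 2 ≤ ∫ y in cube d, f y * f (y + z) := by
  have hf0 := hf.continuous
  have hpolar : ∫ y in cube d, f y * f (y + z) =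
      (∫ y in cube d, f y ^ 2) - (∫ y in cube d, (f (y + z) - f y) ^ 2) / 2 :=
    calc
      ∫ y in cube d, f y * f (y + z)
        = ∫ y in cube d, ((f y ^ 2 + f (y + z) ^ 2) / 2 - (f (y + z) - f y) ^ 2 / 2) := by
          congr! 2 with y
          ring
      _ = (∫ y in cube d, f y ^ 2) - (∫ y in cube d, (f (y + z) - f y) ^ 2) / 2 := by
          rw [integral_sub (integrable_cube_of_continuous (by fun_prop))
            (integrable_cube_of_continuous (by fun_prop)), integral_div, integral_div,
            integral_add (integrable_cube_of_continuous (by fun_prop))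
            (integrable_cube_of_continuous (by fun_prop)),
            (pf.comp (· ^ 2)).integral_comp_add_right z, add_self_div_two]
  linarith [integral_cube_sq_sub_comp_add_le hf pf z]

theorem half_integral_sq_le_integral_mul_comp_add_of_mem_pi (hf : ContDiff ℝ 1 f) (pf : ZPer f)
    {R : ℝ} (hR : 0 < R)
    (hgrad : d * ∫ y in cube d, gradSq f y ≤ R ^ 2 * ∫ y in cube d, f y ^ 2)
    {z : Fin d → ℝ} (hz : z ∈ Set.univ.pi fun _ => Set.Ico 0 R⁻¹) :
    (∫ y in cube d, f y ^ 2) / 2 ≤ ∫ y in cube d, f y * f (y + z) := by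
  have hznorm : ∑ i, z i ^ 2 ≤ d / R ^ 2 := by
    simpa [div_eq_mul_inv] using Finset.sum_le_sum fun i (_ : i ∈ Finset.univ) =>
      pow_le_pow_left₀ (hz i trivial).1 (hz i trivial).2.le 2
  refine half_integral_sq_le_integral_mul_comp_add hf pf ?_
  calc
    (∑ i, z i ^ 2) * ∫ y in cube d, gradSq f y ≤ d / R ^ 2 * ∫ y in cube d, gradSq f y :=
      mul_le_mul_of_nonneg_right hznorm (integral_nonneg (gradSq_nonneg f))
    _ ≤ ∫ y in cube d, f y ^ 2 := by
      rwa [div_mul_eq_mul_div, div_le_iff₀' (by positivity)]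

theorem integrable_integral_mul_comp_add (hf : Continuous f) (hg : Continuous g) :
    Integrable (fun z => ∫ y in cube d, f y * g (y + z)) (volume.restrict (cube d)) :=
  (integrable_prod_cube_of_continuous isCompact_Icc (cube_subset_Icc d)
    (F := fun p => f p.2 * g (p.2 + p.1)) (by fun_prop)).integral_prod_left

theorem integral_integral_mul_comp_add (hf : Continuous f) (hg : Continuous g) (pg : ZPer g) :
    ∫ z in cube d, ∫ y in cube d, f y * g (y + z) =
      (∫ y in cube d, f y) * ∫ y in cube d, g y := by
  rw [integral_integral_swap
    (integrable_prod_cube_of_continuous isCompact_Icc (cube_subset_Icc d) (by fun_prop))]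
  have htranslate (y : Fin d → ℝ) : ∫ z in cube d, g (y + z) = ∫ z in cube d, g z := by
    simp only [add_comm y, pg.integral_comp_add_right]
  simp only [integral_const_mul, htranslate, integral_mul_const]

/-- Nash's inequality: averaging the correlations `∫ f(y) f(y + z) dy` over all `z` in the cell
gives `(∫ f)²`, while each `z` in the small cube of side `R⁻¹` already contributes `½ ∫ f²`. -/
theorem integral_sq_le_mul_sq_integral (hf : ContDiff ℝ 1 f) (pf : ZPer f) (hf0 : ∀ y, 0 ≤ f y)
    {R : ℝ} (hR : 1 ≤ R)
    (hgrad : d * ∫ y in cube d, gradSq f y ≤ R ^ 2 * ∫ y in cube d, f y ^ 2) :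
    ∫ y in cube d, f y ^ 2 ≤ 2 * R ^ d * (∫ y in cube d, f y) ^ 2 := by
  have hR0 : 0 < R := one_pos.trans_le hR
  have hfc := hf.continuous
  set S : Set (Fin d → ℝ) := Set.univ.pi fun _ => Set.Ico 0 R⁻¹
  have hScube : S ⊆ cube d := Set.pi_mono fun _ _ =>
    Set.Ico_subset_Ico_right (inv_le_one_of_one_le₀ hR)
  have hSvol : volume.real S = (R ^ d)⁻¹ := by
    simp [S, Measure.real, volume_pi_pi, hR0.le]
  have hSfin : volume S ≠ ⊤ := measure_ne_top_of_subset hScube (by simp [volume_cube])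
  have hcorrint : IntegrableOn (fun z => ∫ y in cube d, f y * f (y + z)) (cube d) :=
    integrable_integral_mul_comp_add hfc hfc
  have hmass : (R ^ d)⁻¹ * ((∫ y in cube d, f y ^ 2) / 2) ≤ (∫ y in cube d, f y) ^ 2 :=
    calc
      (R ^ d)⁻¹ * ((∫ y in cube d, f y ^ 2) / 2)
        ≤ ∫ z in S, ∫ y in cube d, f y * f (y + z) := by
          rw [← hSvol, ← smul_eq_mul, ← setIntegral_const]
          exact setIntegral_mono_on (integrableOn_const hSfin) (hcorrint.mono_set hScube)
            (MeasurableSet.univ_pi fun _ => measurableSet_Ico) fun z hz =>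
              half_integral_sq_le_integral_mul_comp_add_of_mem_pi hf pf hR0 hgrad hz
      _ ≤ ∫ z in cube d, ∫ y in cube d, f y * f (y + z) :=
          setIntegral_mono_set hcorrint
            (Eventually.of_forall fun z => integral_nonneg fun y => mul_nonneg (hf0 y) (hf0 _))
            (Eventually.of_forall hScube)
      _ = (∫ y in cube d, f y) ^ 2 := by
          rw [integral_integral_mul_comp_add hfc hfc pf, sq]
  rw [inv_mul_le_iff₀ (by positivity)] at hmass
  linarith

end Nash

section Moser

theorem mul_pow_mul_le_pow_two_pow {A r : ℝ} (hA : 0 ≤ A) (hr : 0 ≤ r) {a : ℕ → ℝ}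
    (ha : ∀ k, 0 ≤ a k) (hstep : ∀ k, a (k + 1) ≤ A * r ^ k * a k ^ 2) (k : ℕ) :
    A * r ^ (k + 1) * a k ≤ (A * r * a 0) ^ 2 ^ k := by
  induction k with
  | zero => simp
  | succ k ih =>
    calc
      A * r ^ (k + 2) * a (k + 1) ≤ A * r ^ (k + 2) * (A * r ^ k * a k ^ 2) :=
        mul_le_mul_of_nonneg_left (hstep k) (by positivity)
      _ = (A * r ^ (k + 1) * a k) ^ 2 := by ring
      _ ≤ ((A * r * a 0) ^ 2 ^ k) ^ 2 :=
        pow_le_pow_left₀ (mul_nonneg (by positivity) (ha k)) ih 2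
      _ = (A * r * a 0) ^ 2 ^ (k + 1) := by rw [← pow_mul, pow_succ]

variable {d : ℕ} {f : (Fin d → ℝ) → ℝ} {K : ℝ}

theorem integral_gradSq_pow_le (hf : ContDiff ℝ 1 f)
    (henergy : ∀ p : ℕ, ∫ y in cube d, f y ^ p * gradSq f y ≤ K * ∫ y in cube d, f y ^ (p + 2))
    {n : ℕ} (hn : n ≠ 0) :
    ∫ y in cube d, gradSq (fun z => f z ^ n) y ≤ n ^ 2 * (K * ∫ y in cube d, f y ^ (2 * n)) := by
  have hexp : 2 * (n - 1) + 2 = 2 * n := by omega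
  simp only [gradSq_pow (hf.differentiable one_ne_zero _), integral_const_mul]
  exact mul_le_mul_of_nonneg_left (hexp ▸ henergy (2 * (n - 1))) (by positivity)

theorem integral_pow_two_mul_le (hf : ContDiff ℝ 1 f) (pf : ZPer f) (hf0 : ∀ y, 0 ≤ f y)
    (hK : 0 ≤ K)
    (henergy : ∀ p : ℕ, ∫ y in cube d, f y ^ p * gradSq f y ≤ K * ∫ y in cube d, f y ^ (p + 2))
    {n : ℕ} (hn : n ≠ 0) :
    ∫ y in cube d, f y ^ (2 * n) ≤
      2 * ((d * K + 1) * n) ^ d * (∫ y in cube d, f y ^ n) ^ 2 := by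
  have hdK : 0 ≤ d * K := by positivity
  have hR : 1 ≤ (d * K + 1) * n :=
    one_le_mul_of_one_le_of_one_le (by linarith) (by exact_mod_cast Nat.one_le_iff_ne_zero.2 hn)
  have hI : 0 ≤ ∫ y in cube d, f y ^ (2 * n) := integral_nonneg fun y => pow_nonneg (hf0 y) _
  have hsq (y : Fin d → ℝ) : (f y ^ n) ^ 2 = f y ^ (2 * n) := by rw [← pow_mul, mul_comm]
  have hgrad : d * ∫ y in cube d, gradSq (fun z => f z ^ n) y ≤
      ((d * K + 1) * n) ^ 2 * ∫ y in cube d, (f y ^ n) ^ 2 := by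
    simp only [hsq]
    calc
      d * ∫ y in cube d, gradSq (fun z => f z ^ n) y
        ≤ d * (n ^ 2 * (K * ∫ y in cube d, f y ^ (2 * n))) := by
          gcongr
          exact integral_gradSq_pow_le hf henergy hn
      _ = d * K * (n ^ 2 * ∫ y in cube d, f y ^ (2 * n)) := by ring
      _ ≤ (d * K + 1) ^ 2 * (n ^ 2 * ∫ y in cube d, f y ^ (2 * n)) := by
          gcongr
          nlinarith
      _ = ((d * K + 1) * n) ^ 2 * ∫ y in cube d, f y ^ (2 * n) := by ring
  simpa only [hsq] using integral_sq_le_mul_sq_integral (hf.pow n) (pf.comp (· ^ n))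
    (fun y => pow_nonneg (hf0 y) n) hR hgrad

theorem le_mul_integral_of_integral_pow_mul_gradSq_le (hf : ContDiff ℝ 1 f) (pf : ZPer f)
    (hf0 : ∀ y, 0 ≤ f y) (hK : 0 ≤ K)
    (henergy : ∀ p : ℕ, ∫ y in cube d, f y ^ p * gradSq f y ≤ K * ∫ y in cube d, f y ^ (p + 2))
    (y : Fin d → ℝ) : f y ≤ 2 * (2 * (d * K + 1)) ^ d * ∫ y in cube d, f y := by
  have hL : 1 ≤ d * K + 1 := le_add_of_nonneg_left (by positivity)
  have hI (n : ℕ) : 0 ≤ ∫ y in cube d, f y ^ n := integral_nonneg fun y => pow_nonneg (hf0 y) n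
  have hI1 : 0 ≤ ∫ y in cube d, f y := integral_nonneg hf0
  have hstep (k : ℕ) : ∫ y in cube d, f y ^ 2 ^ (k + 1) ≤
      2 * (d * K + 1) ^ d * (2 ^ d) ^ k * (∫ y in cube d, f y ^ 2 ^ k) ^ 2 := by
    have h := integral_pow_two_mul_le hf pf hf0 hK henergy (n := 2 ^ k) (by positivity)
    rw [← pow_succ'] at h
    convert h using 2
    rw [mul_pow]
    push_cast
    ring
  have hpow (k : ℕ) : ∫ y in cube d, f y ^ 2 ^ k ≤
      (2 * (2 * (d * K + 1)) ^ d * ∫ y in cube d, f y) ^ 2 ^ k := by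
    have hone : 1 ≤ 2 * (d * K + 1) ^ d * (2 ^ d) ^ (k + 1) :=
      one_le_mul_of_one_le_of_one_le (by linarith [one_le_pow₀ hL (n := d)])
        (one_le_pow₀ (one_le_pow₀ one_le_two))
    refine (le_mul_of_one_le_left (hI _) hone).trans
      ((mul_pow_mul_le_pow_two_pow (by positivity) (by positivity) (fun k => hI (2 ^ k)) hstep
        k).trans_eq ?_)
    simp only [pow_zero, pow_one, mul_pow]
    ring
  exact pf.le_of_frequently_integral_pow_le hf.continuous hf0 (by positivity)
    ((tendsto_pow_atTop_atTop_of_one_lt one_lt_two).frequently (Frequently.of_forall hpow)) y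

end Moser

theorem sum_sum_mul_eq_add_sq_sum {ι : Type*} [Fintype ι] {W : ι → ι → ℝ}
    (hW : ∀ i k, W i k = W k i) (u v : ι → ℝ) (b α β : ℝ) :
    ∑ i, ∑ k, (b * W i k + u i * v k) * (β * W i k + α * (u k * v i)) =
      b * β * ∑ i, ∑ k, W i k ^ 2 + α * (∑ k, u k * v k) ^ 2 +
        (b * α + β) * ∑ k, v k * ∑ i, u i * W i k := by
  have hsq : (∑ k, u k * v k) ^ 2 = ∑ i, ∑ k, u i * v i * (u k * v k) := by
    rw [sq, Finset.sum_mul_sum]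
  have hcross : ∑ k, v k * ∑ i, u i * W i k = ∑ i, ∑ k, v k * (u i * W i k) := by
    simp only [Finset.mul_sum]
    exact Finset.sum_comm
  have hcross' : ∑ k, v k * ∑ i, u i * W i k = ∑ i, ∑ k, v i * (u k * W i k) := by
    simp only [Finset.mul_sum, hW]
  have hsplit : (b * α + β) * ∑ k, v k * ∑ i, u i * W i k =
      b * α * ∑ i, ∑ k, v i * (u k * W i k) + β * ∑ i, ∑ k, v k * (u i * W i k) := by
    rw [add_mul]
    nth_rw 1 [hcross']
    rw [hcross]
  rw [hsplit, hsq]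
  simp only [Finset.mul_sum, ← Finset.sum_add_distrib]
  refine Finset.sum_congr rfl fun i _ => Finset.sum_congr rfl fun k _ => ?_
  ring

theorem sqrt_add_le_add_sqrt (a b : ℝ) : √(a + b) ≤ √a + √b := by
  have hle (c : ℝ) : c ≤ √c ^ 2 := (Real.sqrt_le_iff.1 le_rfl).2
  refine Real.sqrt_le_iff.2 ⟨by positivity, ?_⟩
  linarith [hle a, hle b, mul_nonneg (Real.sqrt_nonneg a) (Real.sqrt_nonneg b),
    add_sq √a √b]

section CellProblem

variable {d : ℕ} {V : (Fin d → ℝ) → (Fin d → ℝ) → ℝ} {x Λ : Fin d → ℝ} {w m : (Fin d → ℝ) → ℝ}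
  {H : ℝ}

/-- The `i`-th component of the velocity `Λ + ∇w` of the cell problem. -/
def drift (Λ : Fin d → ℝ) (w : (Fin d → ℝ) → ℝ) (i : Fin d) (y : Fin d → ℝ) : ℝ :=
  Λ i + pder i w y

theorem contDiff_drift (hw : ContDiff ℝ 2 w) (i : Fin d) : ContDiff ℝ 1 (drift Λ w i) :=
  contDiff_const.add (contDiff_pder (by exact_mod_cast hw) i)

theorem ZPer.drift (hw : ZPer w) (i : Fin d) : ZPer (drift Λ w i) :=
  (hw.pder i).comp (Λ i + ·)

theorem pder_drift (i k : Fin d) (y : Fin d → ℝ) :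
    pder k (drift Λ w i) y = pder k (pder i w) y :=
  pder_const_add (Λ i) (pder i w) k y

namespace CellSolAt

theorem pder_density (hsol : CellSolAt V x Λ w m H) (hV : ContDiff ℝ 1 (V x)) (k : Fin d)
    (y : Fin d → ℝ) :
    pder k m y = m y * (∑ i, drift Λ w i y * pder k (pder i w) y + pder k (V x) y) := by
  obtain ⟨hw, -, hm, -, hpos, heq, -, -⟩ := hsol
  have hline {f : (Fin d → ℝ) → ℝ} (hf : ContDiff ℝ 1 f) :
      HasDerivAt (fun s : ℝ => f (y + s • Pi.single k 1)) (pder k f y) 0 := by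
    simpa [pder] using
      hasDerivAt_comp_add_smul (hf.differentiable one_ne_zero) y (Pi.single k 1) 0
  have hlhs := ((HasDerivAt.fun_sum fun i (_ : i ∈ Finset.univ) =>
    (hline (contDiff_drift (Λ := Λ) hw i)).fun_pow 2).div_const 2).fun_add (hline hV)
  have hrhs := ((hline hm).log (by simpa using (hpos y).ne')).add_const H
  simp only [drift, heq] at hlhs
  have h := hlhs.unique hrhs
  simp only [zero_smul, add_zero] at h
  rw [eq_div_iff (hpos y).ne'] at h
  rw [← h, mul_comm (m y), Finset.sum_div]
  congr! 3 with i
  rw [pder_drift, drift]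
  ring

theorem half_sub_le_mul_sum_pder (hsol : CellSolAt V x Λ w m H) (hV : ContDiff ℝ 1 (V x))
    (y : Fin d → ℝ) :
    (gradSq m y - m y ^ 2 * gradSq (V x) y) / 2 ≤
      m y * ∑ k, pder k m y * ∑ i, drift Λ w i y * pder k (pder i w) y := by
  rw [gradSq, gradSq, Finset.mul_sum, Finset.mul_sum, ← Finset.sum_sub_distrib, Finset.sum_div]
  refine Finset.sum_le_sum fun k _ => ?_
  have h := hsol.pder_density hV k y
  calc
    (pder k m y ^ 2 - m y ^ 2 * pder k (V x) y ^ 2) / 2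
      ≤ pder k m y * (pder k m y - m y * pder k (V x) y) := by
        linarith [sq_nonneg (pder k m y - m y * pder k (V x) y)]
    _ = m y * (pder k m y * ∑ i, drift Λ w i y * pder k (pder i w) y) := by
        linear_combination pder k m y * h

theorem mul_sub_le_sum_pder_flux_mul_pder (hsol : CellSolAt V x Λ w m H) (hV : ContDiff ℝ 1 (V x))
    (p : ℕ) (y : Fin d → ℝ) :
    (p + 2) / 2 * (m y ^ p * gradSq m y - m y ^ (p + 2) * gradSq (V x) y) ≤
      ∑ i, ∑ k, pder k (fun z => m z * drift Λ w i z) y *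
        pder i (fun z => drift Λ w k z * m z ^ (p + 1)) y := by
  have ⟨hw, _, hm, _, hpos, _⟩ := hsol
  have hm' : DifferentiableAt ℝ m y := hm.differentiable one_ne_zero y
  have hdrift (i : Fin d) : DifferentiableAt ℝ (drift Λ w i) y :=
    (contDiff_drift hw i).differentiable one_ne_zero y
  have hW (i k : Fin d) : pder k (pder i w) y = pder i (pder k w) y := pder_comm hw.contDiffAt k i
  have hp : 0 ≤ m y ^ p := (pow_pos (hpos y) p).le
  set T := ∑ k, pder k m y * ∑ i, drift Λ w i y * pder k (pder i w) y
  calc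
    (p + 2) / 2 * (m y ^ p * gradSq m y - m y ^ (p + 2) * gradSq (V x) y)
      = (p + 2) * m y ^ p * ((gradSq m y - m y ^ 2 * gradSq (V x) y) / 2) := by ring
    _ ≤ (p + 2) * m y ^ p * (m y * T) := by
        gcongr
        exact hsol.half_sub_le_mul_sum_pder hV y
    _ ≤ m y * m y ^ (p + 1) * ∑ i, ∑ k, pder k (pder i w) y ^ 2 +
          ((p + 1) * m y ^ p) * (∑ k, drift Λ w k y * pder k m y) ^ 2 +
          (m y * ((p + 1) * m y ^ p) + m y ^ (p + 1)) * T := by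
        have hhess : 0 ≤ m y * m y ^ (p + 1) * ∑ i, ∑ k, pder k (pder i w) y ^ 2 := by
          have := hpos y
          positivity
        have hsq : 0 ≤ ((p + 1) * m y ^ p) * (∑ k, drift Λ w k y * pder k m y) ^ 2 := by
          positivity
        linear_combination hhess + hsq
    _ = _ := by
        rw [← sum_sum_mul_eq_add_sq_sum hW]
        refine Finset.sum_congr rfl fun i _ => Finset.sum_congr rfl fun k _ => ?_
        rw [pder_mul hm' (hdrift i), pder_mul (hdrift k) (hm'.fun_pow _), pder_pow hm',
          pder_drift, pder_drift, hW k i]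
        push_cast
        ring

theorem sum_pder_flux_eq_zero (hsol : CellSolAt V x Λ w m H) (y : Fin d → ℝ) :
    ∑ i, pder i (fun z => m z * drift Λ w i z) y = 0 := by
  obtain ⟨-, -, -, -, -, -, hdiv, -⟩ := hsol
  exact hdiv y

theorem integral_pow_mul_gradSq_le (hsol : CellSolAt V x Λ w m H) (hV : ContDiff ℝ 1 (V x))
    (p : ℕ) :
    ∫ y in cube d, m y ^ p * gradSq m y ≤ ∫ y in cube d, m y ^ (p + 2) * gradSq (V x) y := by
  have ⟨hw, pw, hm, pm, _⟩ := hsol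
  have hm0 := hm.continuous
  have hdrift := contDiff_drift (Λ := Λ) hw
  have hF (i : Fin d) : ContDiff ℝ 1 fun z => m z * drift Λ w i z := hm.mul (hdrift i)
  have hG (i : Fin d) : ContDiff ℝ 1 fun z => drift Λ w i z * m z ^ (p + 1) :=
    (hdrift i).mul (hm.pow _)
  have hzero := integral_cube_sum_pder_mul_pder hF (fun i => pm.mul (pw.drift i)) hG
    (fun i => (pw.drift i).mul (pm.comp (· ^ (p + 1))))
  simp only [hsol.sum_pder_flux_eq_zero, zero_mul, integral_zero] at hzero
  have hle := integral_mono (integrable_cube_of_continuous (by fun_prop))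
    (integrable_cube_of_continuous (by fun_prop)) (hsol.mul_sub_le_sum_pder_flux_mul_pder hV p)
  rw [hzero, integral_const_mul, integral_sub (integrable_cube_of_continuous (by fun_prop))
    (integrable_cube_of_continuous (by fun_prop))] at hle
  exact sub_nonpos.1 (nonpos_of_mul_nonpos_right hle (by positivity))

theorem density_le (hsol : CellSolAt V x Λ w m H) (hV : ContDiff ℝ 1 (V x)) {K : ℝ}
    (hK : ∀ y, gradSq (V x) y ≤ K) (y : Fin d → ℝ) : m y ≤ 2 * (2 * (d * K + 1)) ^ d := by
  have ⟨_, _, hm, pm, hpos, _, _, hmass⟩ := hsol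
  have hm0 := hm.continuous
  have henergy (p : ℕ) :
      ∫ y in cube d, m y ^ p * gradSq m y ≤ K * ∫ y in cube d, m y ^ (p + 2) :=
    calc
      ∫ y in cube d, m y ^ p * gradSq m y ≤ ∫ y in cube d, m y ^ (p + 2) * gradSq (V x) y :=
        hsol.integral_pow_mul_gradSq_le hV p
      _ ≤ ∫ y in cube d, m y ^ (p + 2) * K :=
        integral_mono (integrable_cube_of_continuous (by fun_prop))
          (integrable_cube_of_continuous (by fun_prop))
          fun y => mul_le_mul_of_nonneg_left (hK y) (pow_pos (hpos y) _).le
      _ = K * ∫ y in cube d, m y ^ (p + 2) := by rw [integral_mul_const, mul_comm]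
  simpa only [hmass, mul_one] using le_mul_integral_of_integral_pow_mul_gradSq_le hm pm
    (fun y => (hpos y).le) ((gradSq_nonneg (V x) 0).trans (hK 0)) henergy y

theorem density_sub_one_add_le_sum_flux_mul_pder (hsol : CellSolAt V x Λ w m H) {B : ℝ}
    (hB : ∀ y, V x y ≤ B) (y : Fin d → ℝ) :
    m y - 1 + m y * (H - B - (∑ i, Λ i ^ 2) / 2) ≤ ∑ i, m y * drift Λ w i y * pder i w y := by
  obtain ⟨-, -, -, -, hpos, heq, -, -⟩ := hsol
  have hm := hpos y
  have hHJ : (∑ i, drift Λ w i y ^ 2) / 2 + V x y = Real.log (m y) + H := heq y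
  have hkinetic : ((∑ i, drift Λ w i y ^ 2) - ∑ i, Λ i ^ 2) / 2 ≤
      ∑ i, drift Λ w i y * pder i w y := by
    rw [← Finset.sum_sub_distrib, Finset.sum_div]
    refine Finset.sum_le_sum fun i _ => ?_
    rw [drift]
    linarith [sq_nonneg (pder i w y)]
  calc
    m y - 1 + m y * (H - B - (∑ i, Λ i ^ 2) / 2)
      = m y * (1 - (m y)⁻¹ + H - B - (∑ i, Λ i ^ 2) / 2) := by
        field_simp
        ring
    _ ≤ m y * ∑ i, drift Λ w i y * pder i w y :=
        mul_le_mul_of_nonneg_left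
          (by linarith [Real.one_sub_inv_le_log_of_pos hm, hB y]) hm.le
    _ = ∑ i, m y * drift Λ w i y * pder i w y := by simp only [Finset.mul_sum, mul_assoc]

theorem effectiveHamiltonian_le (hsol : CellSolAt V x Λ w m H) {B : ℝ} (hB : ∀ y, V x y ≤ B) :
    H ≤ (∑ i, Λ i ^ 2) / 2 + B := by
  have ⟨hw, pw, hm, pm, _, _, _, hmass⟩ := hsol
  have hm0 := hm.continuous
  have hw1 : ContDiff ℝ 1 w := hw.of_le one_le_two
  have hdrift := contDiff_drift (Λ := Λ) hw
  have hdrift0 := fun i => (hdrift i).continuous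
  have hortho : ∫ y in cube d, ∑ i, m y * drift Λ w i y * pder i w y = 0 := by
    simpa only [hsol.sum_pder_flux_eq_zero, mul_zero, integral_zero, neg_zero] using
      integral_cube_sum_mul_pder (fun i => hm.mul (hdrift i)) (fun i => pm.mul (pw.drift i)) hw1 pw
  have hle := integral_mono (integrable_cube_of_continuous (by fun_prop))
    (integrable_cube_of_continuous (by fun_prop))
    (hsol.density_sub_one_add_le_sum_flux_mul_pder hB)
  rw [hortho, integral_add (integrable_cube_of_continuous (by fun_prop))
    (integrable_cube_of_continuous (by fun_prop)),
    integral_sub (integrable_cube_of_continuous hm0) (integrable_const 1), integral_mul_const,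
    hmass] at hle
  simp only [integral_const, probReal_univ, smul_eq_mul] at hle
  linarith

theorem sum_drift_sq_le (hsol : CellSolAt V x Λ w m H) {B M : ℝ} (hB : ∀ y, |V x y| ≤ B)
    (hM : ∀ y, m y ≤ M) (y : Fin d → ℝ) :
    ∑ i, drift Λ w i y ^ 2 ≤ ∑ i, Λ i ^ 2 + 2 * (Real.log M + 2 * B) := by
  have hH := hsol.effectiveHamiltonian_le fun y => (abs_le.1 (hB y)).2
  obtain ⟨-, -, -, -, hpos, heq, -, -⟩ := hsol
  have hHJ : (∑ i, drift Λ w i y ^ 2) / 2 + V x y = Real.log (m y) + H := heq y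
  linarith [Real.log_le_log (hpos y) (hM y), (abs_le.1 (hB y)).1]

end CellSolAt

end CellProblem

theorem stmt13_general {d : ℕ} (V : (Fin d → ℝ) → (Fin d → ℝ) → ℝ)
    (hV : ContDiff ℝ 1 (uncurry V)) (hV₁ : ∀ y, ZPer fun x => V x y) (hV₂ : ∀ x, ZPer (V x)) :
    ∃ C > 0, ∀ (x Λ : Fin d → ℝ) (w m : (Fin d → ℝ) → ℝ) (H : ℝ), CellSolAt V x Λ w m H →
      (∀ y, m y ≤ C) ∧
      ∀ y, √(∑ i, (Λ i + pder i w y) ^ 2) ≤ C + √(∑ i, Λ i ^ 2) := by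
  have hVx (x : Fin d → ℝ) : ContDiff ℝ 1 (V x) := hV.comp (contDiff_const.prodMk contDiff_id)
  obtain ⟨B, hB⟩ := exists_abs_le_of_continuous_of_zPer hV.continuous hV₁ hV₂
  obtain ⟨K, hK⟩ := exists_abs_le_of_continuous_of_zPer (continuous_gradSq_uncurry hV)
    (fun y x k => congrArg (gradSq · y) (funext fun z => hV₁ z x k)) fun x => (hV₂ x).gradSq
  have hK0 : 0 ≤ K := (abs_nonneg _).trans (hK 0 0)
  set M : ℝ := 2 * (2 * (d * K + 1)) ^ d
  have hM : 0 < M := by positivity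
  set D : ℝ := √(2 * (Real.log M + 2 * B))
  refine ⟨M + D, by positivity, fun x Λ w m H hsol => ?_⟩
  have hdensity := hsol.density_le (hVx x) fun y => (le_abs_self _).trans (hK x y)
  refine ⟨fun y => (hdensity y).trans (le_add_of_nonneg_right (Real.sqrt_nonneg _)), fun y => ?_⟩
  calc
    √(∑ i, (Λ i + pder i w y) ^ 2) ≤ √(∑ i, Λ i ^ 2 + 2 * (Real.log M + 2 * B)) :=
      Real.sqrt_le_sqrt (hsol.sum_drift_sq_le (hB x) hdensity y)
    _ ≤ √(∑ i, Λ i ^ 2) + D := sqrt_add_le_add_sqrt _ _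
    _ ≤ M + D + √(∑ i, Λ i ^ 2) := by linarith

/-- a uniform (in `x` and `Λ`) upper bound for `m̃` and the bound
`sup_y |Λ + ∇_y w̃(x,Λ,y)| ≤ C + |Λ|` for solutions of the cell problem. -/
theorem stmt13 {d : ℕ} (V : (Fin d → ℝ) → (Fin d → ℝ) → ℝ) (hV : SmoothV V)
    (w m : (Fin d → ℝ) → (Fin d → ℝ) → (Fin d → ℝ) → ℝ)
    (H : (Fin d → ℝ) → (Fin d → ℝ) → ℝ)
    (hsol : ∀ x Λ, CellSolAt V x Λ (w x Λ) (m x Λ) (H x Λ)) :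
    ∃ C > 0, ∀ (x Λ : Fin d → ℝ),
      (∀ y, m x Λ y ≤ C) ∧
      (∀ y, Real.sqrt (∑ i, (Λ i + pder i (w x Λ) y) ^ 2)
          ≤ C + Real.sqrt (∑ i, (Λ i) ^ 2)) := by
  obtain ⟨C, hC, hbound⟩ := stmt13_general V (hV.1.of_le (by exact_mod_cast le_top)) hV.2.1 hV.2.2
  exact ⟨C, hC, fun x Λ => hbound x Λ _ _ _ (hsol x Λ)⟩
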